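/- Let K be a field of characteristic zero, A_n(K) the Weyl algebra with a fixed partition of {1,…,n} into blocks of sizes n_1,…,n_p. Let M be a left A_n(K)-module generated by f_1,…,f_m, E a free A_n(K)-module with free generators e_1,…,e_m, π: E → M the natural epimorphism (π(e_i) = f_i), N = Ker π, and G = {g_1,…,g_d} a Gröbner basis of N with respect to <_1,…,<_p. For (r_1,…,r_p) ∈ ℕ^p set M_{r_1,…,r_p} = Σ_{i=1}^m W_{r_1,…,r_p} f_i, let V_{r_1,…,r_p} be the set of terms u with ord_i u ≤ r_i (1 ≤ i ≤ p) such that u_g^{(1)} ∤ u for all g ∈ G, let V'_{r_1,…,r_p} be the set of terms u with ord_i u ≤ r_i not in V_{r_1,…,r_p} such that whenever u_g^{(1)} | u for some g ∈ G with θ = u/u_g^{(1)}, there exists i ∈ {2,…,p} with ord_i(θ) + ord_i(u_g^{(i)}) > r_i, and let U_{r_1,…,r_p} = V_{r_1,…,r_p} ∪ V'_{r_1,…,r_p}. Then for every (r_1,…,r_p) ∈ ℕ^p, the set π(U_{r_1,…,r_p}) is a basis of the K-vector space M_{r_1,…,r_p}. -/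

import Mathlib

set_option synthInstance.maxHeartbeats 400000
set_option maxHeartbeats 1000000

open MvPolynomial

noncomputable def weylGens (n : ℕ) (K : Type) [Field K] :
    Set (Module.End K (MvPolynomial (Fin n) K)) :=
  (Set.range fun i : Fin n =>
      (LinearMap.mulLeft K (X i : MvPolynomial (Fin n) K) : Module.End K (MvPolynomial (Fin n) K))) ∪
  (Set.range fun i : Fin n => ((pderiv i).toLinearMap : Module.End K (MvPolynomial (Fin n) K)))

noncomputable def WeylAlg (n : ℕ) (K : Type) [Field K] :
    Subalgebra K (Module.End K (MvPolynomial (Fin n) K)) :=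
  Algebra.adjoin K (weylGens n K)

noncomputable def wx (n : ℕ) (K : Type) [Field K] (i : Fin n) : WeylAlg n K :=
  ⟨LinearMap.mulLeft K (X i), Algebra.subset_adjoin (Set.mem_union_left _ ⟨i, rfl⟩)⟩

noncomputable def wd (n : ℕ) (K : Type) [Field K] (i : Fin n) : WeylAlg n K :=
  ⟨(pderiv i).toLinearMap, Algebra.subset_adjoin (Set.mem_union_right _ ⟨i, rfl⟩)⟩

noncomputable def wMono (n : ℕ) (K : Type) [Field K] (α β : Fin n → ℕ) : WeylAlg n K :=
  (((List.finRange n).map fun i => wx n K i ^ α i).prod) *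
  (((List.finRange n).map fun i => wd n K i ^ β i).prod)

def ordTot (n : ℕ) (α β : Fin n → ℕ) : ℕ := (∑ i, α i) + ∑ i, β i

noncomputable def bernW (n : ℕ) (K : Type) [Field K] (r : ℤ) : Submodule K (WeylAlg n K) :=
  Submodule.span K {D | ∃ α β : Fin n → ℕ, (ordTot n α β : ℤ) ≤ r ∧ D = wMono n K α β}

noncomputable def modFil (n : ℕ) (K : Type) [Field K] (M : Type) [AddCommGroup M]
    [Module K M] [Module (WeylAlg n K) M] (m : ℕ) (g : Fin m → M) (r : ℤ) :
    Submodule K M :=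
  Submodule.span K {x | ∃ i, ∃ D ∈ bernW n K r, x = D • g i}


/-- The `j`-th order of the monomial `x^α ∂^β` with respect to the partition `B`. -/
def ordBlk {n p : ℕ} (B : Fin n → Fin p) (α β : Fin n → ℕ) (j : Fin p) : ℕ :=
  ∑ i ∈ Finset.univ.filter (fun i => B i = j), (α i + β i)

/-- An exponent pair `(α, β)` encoding the monomial `x^α ∂^β`. -/
abbrev WExp (n : ℕ) := (Fin n → ℕ) × (Fin n → ℕ)

/-- A term `θ e_i` of the free module `E`: a monomial together with the index of a
free generator. -/
abbrev WTerm (n m : ℕ) := WExp n × Fin m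

/-- The `j`-th order of a term. -/
def ordT {n p m : ℕ} (B : Fin n → Fin p) (j : Fin p) (t : WTerm n m) : ℕ :=
  ordBlk B t.1.1 t.1.2 j

/-- The comparison vector of a monomial used to define the order `<_j`:
the `j`-th order, then the other orders, then the exponents of the `j`-th block,
then the remaining exponents. -/
def keyList {n p : ℕ} (B : Fin n → Fin p) (j : Fin p) (t : WExp n) : List ℕ :=
  [ordBlk B t.1 t.2 j] ++
  (((List.finRange p).filter fun k => k ≠ j).map (ordBlk B t.1 t.2)) ++
  (((List.finRange n).filter fun i => B i = j).map t.1) ++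
  (((List.finRange n).filter fun i => B i = j).map t.2) ++
  ((((List.finRange n).filter fun i => B i ≠ j).map fun i => [t.1 i, t.2 i]).flatten)

/-- The order `<_j` on monomials. -/
def monLt {n p : ℕ} (B : Fin n → Fin p) (j : Fin p) (s t : WExp n) : Prop :=
  List.Lex (· < ·) (keyList B j s) (keyList B j t)

/-- The order `<_j` on terms of the free module. -/
def termLt {n p m : ℕ} (B : Fin n → Fin p) (j : Fin p) (s t : WTerm n m) : Prop :=
  monLt B j s.1 t.1 ∨ (s.1 = t.1 ∧ s.2 < t.2)

/-- Divisibility of terms: same free generator and componentwise smaller exponents. -/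
def tdvd {n m : ℕ} (s t : WTerm n m) : Prop :=
  s.2 = t.2 ∧ s.1.1 ≤ t.1.1 ∧ s.1.2 ≤ t.1.2

/-- The quotient monomial `t/s` of two terms with `s ∣ t`. -/
def tquot {n m : ℕ} (t s : WTerm n m) : WExp n :=
  (t.1.1 - s.1.1, t.1.2 - s.1.2)

/-- The element `θ e_i` of the free module `E = A_n(K)^m`. -/
noncomputable def termVal {n m : ℕ} (K : Type) [Field K] (t : WTerm n m) :
    Fin m → WeylAlg n K :=
  Pi.single t.2 (wMono n K t.1.1 t.1.2)

/-- `c` is the coefficient expansion of `f ∈ E` in the basis of terms. -/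
def Represents {n m : ℕ} {K : Type} [Field K] (c : WTerm n m →₀ K)
    (f : Fin m → WeylAlg n K) : Prop :=
  f = c.sum fun t a => a • termVal K t

/-- `u` is the `j`-th leader of the element represented by `c`: the greatest term
appearing in it with respect to `<_j`. -/
def IsLeader {n p m : ℕ} {K : Type} [Field K] (B : Fin n → Fin p) (j : Fin p)
    (c : WTerm n m →₀ K) (u : WTerm n m) : Prop :=
  u ∈ c.support ∧ ∀ t ∈ c.support, t ≠ u → termLt B j t u

/-- `ρ(g) ∣ ρ(f)`, where `u g`, `u f` are the leaders of `g` and `f`: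
the first leaders divide and `d_j(g) ≤ d_j(f)` for all `j`. -/
def rhoDvd {n p m : ℕ} (B : Fin n → Fin p) (hp : 0 < p)
    (ug uf : Fin p → WTerm n m) : Prop :=
  tdvd (ug ⟨0, hp⟩) (uf ⟨0, hp⟩) ∧
  ∀ j, (ordT B j (ug j) : ℤ) - (ordT B j (ug ⟨0, hp⟩) : ℤ) ≤
       (ordT B j (uf j) : ℤ) - (ordT B j (uf ⟨0, hp⟩) : ℤ)

/-- One-step `(<_k, <_{i₁}, …, <_{i_l})`-reduction of `f` to `h` modulo `g`, where `cg`
is the expansion of `g` and `ug j` its `j`-th leader. -/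
def RedStep {n p m : ℕ} {K : Type} [Field K] (B : Fin n → Fin p)
    (k : Fin p) (is : List (Fin p))
    (g : Fin m → WeylAlg n K) (cg : WTerm n m →₀ K) (ug : Fin p → WTerm n m)
    (f h : Fin m → WeylAlg n K) : Prop :=
  ∃ cf : WTerm n m →₀ K, Represents cf f ∧
    ∃ w ∈ cf.support, tdvd (ug k) w ∧
      (∀ i ∈ is, ∀ uf : WTerm n m, IsLeader B i cf uf →
        ordBlk B (tquot w (ug k)).1 (tquot w (ug k)).2 i + ordT B i (ug i) ≤
          ordT B i uf) ∧
      h = f - (cf w * (cg (ug k))⁻¹) •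
        fun j => wMono n K (tquot w (ug k)).1 (tquot w (ug k)).2 * g j

/-- The element represented by `cf` is `(<_k, <_{i₁}, …, <_{i_l})`-reduced with respect to an
element with leaders `ug`. -/
def ReducedWrt {n p m : ℕ} {K : Type} [Field K] (B : Fin n → Fin p)
    (k : Fin p) (is : List (Fin p))
    (cf : WTerm n m →₀ K) (ug : Fin p → WTerm n m) : Prop :=
  ∀ w ∈ cf.support, tdvd (ug k) w →
    ∃ i ∈ is, ∃ uf : WTerm n m, IsLeader B i cf uf ∧
      ordT B i uf <
        ordBlk B (tquot w (ug k)).1 (tquot w (ug k)).2 i + ordT B i (ug i)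

/-- The component `W_{r_1,…,r_p}` of the `p`-dimensional filtration of the Weyl algebra. -/
noncomputable def bernWB (n p : ℕ) (K : Type) [Field K] (B : Fin n → Fin p)
    (r : Fin p → ℤ) : Submodule K (WeylAlg n K) :=
  Submodule.span K
    {D | ∃ α β : Fin n → ℕ, (∀ j, (ordBlk B α β j : ℤ) ≤ r j) ∧ D = wMono n K α β}

/-- The component `M_{r_1,…,r_p} = Σ_i W_{r_1,…,r_p} g_i` of the induced filtration of `M`. -/
noncomputable def modFilB (n p : ℕ) (K : Type) [Field K] (B : Fin n → Fin p)
    (M : Type) [AddCommGroup M] [Module K M] [Module (WeylAlg n K) M]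
    (m : ℕ) (g : Fin m → M) (r : Fin p → ℤ) : Submodule K M :=
  Submodule.span K {x | ∃ i, ∃ D ∈ bernWB n p K B r, x = D • g i}

section Helpers

lemma prod_pow_add_of_commute {ι R : Type*} [Monoid R] (a : ι → R)
    (h : ∀ i j, Commute (a i) (a j)) (α γ : ι → ℕ) (l : List ι) :
    (l.map fun i => a i ^ (α + γ) i).prod =
      (l.map fun i => a i ^ α i).prod * (l.map fun i => a i ^ γ i).prod := by
  induction l with
  | nil => simp
  | cons b l ih =>
    rw [List.map_cons, List.prod_cons, ih, Pi.add_apply, pow_add]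
    simp only [List.map_cons, List.prod_cons]
    have hc : Commute (a b ^ γ b) ((l.map fun i => a i ^ α i).prod) := by
      apply Commute.list_prod_right
      intro x hx
      obtain ⟨i, -, rfl⟩ := List.mem_map.1 hx
      exact (h b i).pow_pow _ _
    simp only [mul_assoc]
    rw [← mul_assoc (a b ^ γ b), hc.eq, mul_assoc]

lemma prod_pow_single {ι R : Type*} [DecidableEq ι] [Monoid R] (a : ι → R) (i : ι) (l : List ι) :
    (l.map fun j => a j ^ (Pi.single i 1 : ι → ℕ) j).prod = a i ^ l.count i := by
  induction l with
  | nil => simp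
  | cons b l ih =>
    simp only [List.map_cons, List.prod_cons, ih]
    by_cases hb : b = i
    · subst hb; simp [pow_succ']
    · simp [hb]

lemma prod_pow_single_fin {n : ℕ} {R : Type*} [Monoid R] (a : Fin n → R) (i : Fin n) :
    ((List.finRange n).map fun j => a j ^ (Pi.single i 1 : Fin n → ℕ) j).prod = a i := by
  rw [prod_pow_single, List.count_eq_one_of_mem (List.nodup_finRange n) (List.mem_finRange i),
    pow_one]

variable {n : ℕ} {K : Type} [Field K]

lemma wx_comm (i j : Fin n) : Commute (wx n K i) (wx n K j) := by
  apply Subtype.ext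
  apply LinearMap.ext
  intro q
  simp [wx, mul_left_comm]

lemma wd_comm (i j : Fin n) : Commute (wd n K i) (wd n K j) := by
  apply Subtype.ext
  change (pderiv i).toLinearMap * (pderiv j).toLinearMap =
    (pderiv j).toLinearMap * (pderiv i).toLinearMap
  apply LinearMap.ext
  intro q
  induction q using MvPolynomial.induction_on' with
  | monomial s a =>
    simp only [Module.End.mul_apply, Derivation.coeFn_coe, pderiv_monomial]
    by_cases h : i = j
    · subst h; rfl
    · rw [tsub_right_comm]
      congr 1
      simp [Finsupp.single_apply, h, Ne.symm h]
      ring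
  | add q q' hq hq' => rw [map_add, map_add, hq, hq']

/-- x part -/
noncomputable def xPart (n : ℕ) (K : Type) [Field K] (α : Fin n → ℕ) : WeylAlg n K :=
  ((List.finRange n).map fun i => wx n K i ^ α i).prod

/-- d part -/
noncomputable def dPart (n : ℕ) (K : Type) [Field K] (α : Fin n → ℕ) : WeylAlg n K :=
  ((List.finRange n).map fun i => wd n K i ^ α i).prod

lemma wMono_eq (α β : Fin n → ℕ) : wMono n K α β = xPart n K α * dPart n K β := rfl

lemma xPart_succ (i : Fin n) (α : Fin n → ℕ) :
    xPart n K (α + Pi.single i 1) = wx n K i * xPart n K α := by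
  rw [add_comm]
  unfold xPart
  rw [prod_pow_add_of_commute _ wx_comm, prod_pow_single_fin]

lemma dPart_succ (i : Fin n) (α : Fin n → ℕ) :
    dPart n K (α + Pi.single i 1) = wd n K i * dPart n K α := by
  rw [add_comm]
  unfold dPart
  rw [prod_pow_add_of_commute _ wd_comm, prod_pow_single_fin]

lemma wx_mul_wMono (i : Fin n) (α β : Fin n → ℕ) :
    wx n K i * wMono n K α β = wMono n K (α + Pi.single i 1) β := by
  rw [wMono_eq, wMono_eq, xPart_succ, mul_assoc]

lemma xPart_apply (α : Fin n → ℕ) (q : MvPolynomial (Fin n) K) :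
    ((xPart n K α : WeylAlg n K) : Module.End K (MvPolynomial (Fin n) K)) q =
      monomial (Finsupp.equivFunOnFinite.symm α) 1 * q := by
  have hx : ∀ (j : Fin n) (k : ℕ) (q : MvPolynomial (Fin n) K),
      ((wx n K j ^ k : WeylAlg n K) : Module.End K (MvPolynomial (Fin n) K)) q = X j ^ k * q := by
    intro j k
    induction k with
    | zero => intro q; simp
    | succ k ih => intro q; rw [pow_succ]; simp [ih, wx, pow_succ, mul_assoc]
  have h : ∀ (l : List (Fin n)) (q : MvPolynomial (Fin n) K),
      (((l.map fun i => wx n K i ^ α i).prod : WeylAlg n K) : Module.End K (MvPolynomial (Fin n) K)) q =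
      (l.map fun i => (X i : MvPolynomial (Fin n) K) ^ α i).prod * q := by
    intro l
    induction l with
    | nil => intro q; simp
    | cons b l ih =>
      intro q
      simp only [List.map_cons, List.prod_cons, MulMemClass.coe_mul, Module.End.mul_apply, ih, hx,
        mul_assoc]
  rw [xPart, h, monomial_eq]
  congr 1
  rw [← List.ofFn_eq_map, List.prod_ofFn, Finsupp.prod_fintype]
  · simp
  · simp

lemma wd_mul_xPart (i : Fin n) (α : Fin n → ℕ) :
    wd n K i * xPart n K α = xPart n K α * wd n K i +
      (α i : K) • xPart n K (α - Pi.single i 1) := by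
  apply Subtype.ext
  apply LinearMap.ext
  intro q
  have hd : ∀ (q : MvPolynomial (Fin n) K),
      ((wd n K i : WeylAlg n K) : Module.End K (MvPolynomial (Fin n) K)) q = pderiv i q := fun q => rfl
  have e : (Finsupp.equivFunOnFinite.symm α - Finsupp.single i 1 : Fin n →₀ ℕ) =
      Finsupp.equivFunOnFinite.symm (α - Pi.single i 1) := by
    ext j; simp [Finsupp.single_apply, Pi.single_apply, eq_comm]
  simp only [MulMemClass.coe_mul, Module.End.mul_apply, xPart_apply, hd, Derivation.leibniz,
    pderiv_monomial, smul_eq_mul, e, Subalgebra.coe_add, Subalgebra.coe_smul, LinearMap.add_apply,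
    LinearMap.smul_apply]
  rw [← smul_mul_assoc, smul_monomial, mul_comm q]
  simp

lemma wd_mul_wMono (i : Fin n) (α β : Fin n → ℕ) :
    wd n K i * wMono n K α β = wMono n K α (β + Pi.single i 1) +
      (α i : K) • wMono n K (α - Pi.single i 1) β := by
  simp only [wMono_eq, dPart_succ]
  rw [← mul_assoc, wd_mul_xPart, add_mul, mul_assoc, smul_mul_assoc]

/-- monomial of an exponent -/
noncomputable def wM (n : ℕ) (K : Type) [Field K] (t : WExp n) : WeylAlg n K := wMono n K t.1 t.2

/-- lower terms -/
noncomputable def lowW (n : ℕ) (K : Type) [Field K] (t : WExp n) : Submodule K (WeylAlg n K) :=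
  Submodule.span K (wM n K '' Set.Iio t)

/-- `D` has symbol `θ` -/
def HasSym (D : WeylAlg n K) (θ : WExp n) : Prop :=
  ∀ s, ∃ y ∈ lowW n K (θ + s), D * wM n K s = wM n K (θ + s) + y

lemma lowW_mono {s t : WExp n} (h : s ≤ t) : lowW n K s ≤ lowW n K t :=
  Submodule.span_mono (Set.image_mono (Set.Iio_subset_Iio h))

lemma wM_mem_lowW {s t : WExp n} (h : s < t) : wM n K s ∈ lowW n K t :=
  Submodule.subset_span ⟨s, h, rfl⟩

lemma HasSym.low {D : WeylAlg n K} {θ : WExp n} (h : HasSym D θ) (t : WExp n)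
    {x : WeylAlg n K} (hx : x ∈ lowW n K t) : D * x ∈ lowW n K (θ + t) := by
  unfold lowW at hx
  induction hx using Submodule.span_induction with
  | mem x hx =>
    obtain ⟨s, hs, rfl⟩ := hx
    have hs' : θ + s < θ + t := by gcongr; exact hs
    obtain ⟨y, hy, e⟩ := h s
    rw [e]
    exact add_mem (wM_mem_lowW (K := K) hs') (lowW_mono hs'.le hy)
  | zero => simp
  | add x y _ _ hx hy => rw [mul_add]; exact add_mem hx hy
  | smul a x _ hx => rw [mul_smul_comm]; exact Submodule.smul_mem _ _ hx

lemma HasSym.one : HasSym (1 : WeylAlg n K) 0 := by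
  intro s
  exact ⟨0, zero_mem _, by rw [one_mul, zero_add, add_zero]⟩

lemma HasSym.mul {D D' : WeylAlg n K} {θ θ' : WExp n} (h : HasSym D θ) (h' : HasSym D' θ') :
    HasSym (D * D') (θ + θ') := by
  intro s
  obtain ⟨y, hy, e⟩ := h' s
  obtain ⟨z, hz, e'⟩ := h (θ' + s)
  refine ⟨z + D * y, ?_, ?_⟩
  · rw [add_assoc]; exact add_mem hz (h.low _ hy)
  · rw [mul_assoc, e, mul_add, e', add_assoc, add_assoc]

lemma HasSym.pow {D : WeylAlg n K} {θ : WExp n} (h : HasSym D θ) (k : ℕ) :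
    HasSym (D ^ k) (k • θ) := by
  induction k with
  | zero => simpa using HasSym.one
  | succ k ih => rw [pow_succ, succ_nsmul]; exact ih.mul h

lemma HasSym.list {ι : Type*} {D : ι → WeylAlg n K} {θ : ι → WExp n}
    (h : ∀ i, HasSym (D i) (θ i)) (l : List ι) :
    HasSym (l.map D).prod (l.map θ).sum := by
  induction l with
  | nil => simpa using HasSym.one
  | cons b l ih => simpa using (h b).mul ih

lemma hasSym_wx (i : Fin n) : HasSym (wx n K i) (Pi.single i 1, 0) := by
  rintro ⟨α, β⟩
  refine ⟨0, zero_mem _, ?_⟩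
  simp [wM, wx_mul_wMono, add_comm]

lemma hasSym_wd (i : Fin n) : HasSym (wd n K i) (0, Pi.single i 1) := by
  rintro ⟨α, β⟩
  refine ⟨(α i : K) • wM n K (α - Pi.single i 1, β), ?_, ?_⟩
  swap
  · simp only [wM, wd_mul_wMono, Prod.mk_add_mk, zero_add]
    rw [add_comm β]
  apply Submodule.smul_mem
  apply wM_mem_lowW
  apply lt_of_le_of_ne
  · constructor
    · intro j; simp
    · intro j; simp
  · intro h
    have := congrFun (congrArg Prod.snd h) i
    simp at this

lemma sum_single_list (α : Fin n → ℕ) :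
    ((List.finRange n).map fun i => α i • (Pi.single i 1 : Fin n → ℕ)).sum = α := by
  rw [← List.ofFn_eq_map, List.sum_ofFn]
  ext j
  simp [Finset.sum_apply, Pi.single_apply]

lemma hasSym_wM (t : WExp n) : HasSym (wM n K t) t := by
  have h1 : HasSym (xPart n K t.1) (t.1, 0) := by
    convert HasSym.list (fun i : Fin n => (hasSym_wx (K := K) i).pow (t.1 i)) (List.finRange n) using 1
    · rfl
    apply Prod.ext
    · change _ = (AddMonoidHom.fst _ _) _
      rw [map_list_sum, List.map_map]
      exact (sum_single_list t.1).symm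
    · change _ = (AddMonoidHom.snd _ _) _
      rw [map_list_sum, List.map_map]
      simp [Function.comp_def]
  have h2 : HasSym (dPart n K t.2) (0, t.2) := by
    convert HasSym.list (fun i : Fin n => (hasSym_wd (K := K) i).pow (t.2 i)) (List.finRange n) using 1
    · rfl
    apply Prod.ext
    · change _ = (AddMonoidHom.fst _ _) _
      rw [map_list_sum, List.map_map]
      simp [Function.comp_def]
    · change _ = (AddMonoidHom.snd _ _) _
      rw [map_list_sum, List.map_map]
      exact (sum_single_list t.2).symm
  have := h1.mul h2
  simpa [wM, wMono_eq] using this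

/-! Linear independence -/

lemma wd_pow_monomial (i : Fin n) (k : ℕ) (γ : Fin n →₀ ℕ) (a : K) :
    ((wd n K i ^ k : WeylAlg n K) : Module.End K (MvPolynomial (Fin n) K)) (monomial γ a) =
      monomial (γ - Finsupp.single i k) (a * ((γ i).descFactorial k : K)) := by
  induction k with
  | zero => simp
  | succ k ih =>
    rw [pow_succ']
    simp only [MulMemClass.coe_mul, Module.End.mul_apply, ih]
    change pderiv i _ = _
    rw [pderiv_monomial, tsub_tsub, ← Finsupp.single_add, Nat.descFactorial_succ]
    congr 1
    simp
    ring

lemma dlist_monomial (β : Fin n → ℕ) (l : List (Fin n)) (hl : l.Nodup) (γ : Fin n →₀ ℕ) (a : K) :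
    ∃ γ' : Fin n →₀ ℕ, (∀ i ∈ l, γ' i = γ i - β i) ∧ (∀ i, i ∉ l → γ' i = γ i) ∧
      (((l.map fun i => wd n K i ^ β i).prod : WeylAlg n K) : Module.End K (MvPolynomial (Fin n) K)) (monomial γ a) =
        monomial γ' (a * (l.map fun i => ((γ i).descFactorial (β i) : K)).prod) := by
  induction l with
  | nil => exact ⟨γ, by simp, by simp, by simp⟩
  | cons b l ih =>
    obtain ⟨hb, hl⟩ := List.nodup_cons.1 hl
    obtain ⟨γ', h1, h2, h3⟩ := ih hl
    refine ⟨γ' - Finsupp.single b (β b), ?_, ?_, ?_⟩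
    · intro i hi
      by_cases hib : i = b
      · subst hib; simp [h2 _ hb]
      · have := List.mem_of_ne_of_mem hib hi
        simp [h1 _ this, Finsupp.single_apply, Ne.symm hib]
    · intro i hi
      rw [List.mem_cons, not_or] at hi
      simp [h2 _ hi.2, Finsupp.single_apply, Ne.symm hi.1]
    · simp only [List.map_cons, List.prod_cons, MulMemClass.coe_mul, Module.End.mul_apply, h3,
        wd_pow_monomial, h2 _ hb]
      congr 1
      ring

lemma dPart_monomial (β : Fin n → ℕ) (γ : Fin n →₀ ℕ) :
    ((dPart n K β : WeylAlg n K) : Module.End K (MvPolynomial (Fin n) K)) (monomial γ 1) =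
      monomial (γ - Finsupp.equivFunOnFinite.symm β)
        (∏ i, ((γ i).descFactorial (β i) : K)) := by
  obtain ⟨γ', h1, -, h3⟩ := dlist_monomial (K := K) β (List.finRange n) (List.nodup_finRange n) γ 1
  rw [dPart, h3]
  have : γ' = γ - Finsupp.equivFunOnFinite.symm β := by
    ext i; simp [h1 i (List.mem_finRange i)]
  rw [this, one_mul, ← List.ofFn_eq_map, List.prod_ofFn]

lemma wM_monomial (t : WExp n) (γ : Fin n →₀ ℕ) :
    ((wM n K t : WeylAlg n K) : Module.End K (MvPolynomial (Fin n) K)) (monomial γ 1) =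
      monomial (Finsupp.equivFunOnFinite.symm t.1 + (γ - Finsupp.equivFunOnFinite.symm t.2))
        (∏ i, ((γ i).descFactorial (t.2 i) : K)) := by
  rw [wM, wMono_eq, MulMemClass.coe_mul, Module.End.mul_apply, dPart_monomial, xPart_apply,
    monomial_mul, one_mul]

lemma represents_zero {m : ℕ} [CharZero K] (c : WTerm n m →₀ K)
    (h : Represents c (0 : Fin m → WeylAlg n K)) : c = 0 := by
  by_contra hc
  have hne : c.support.Nonempty := Finsupp.support_nonempty_iff.2 hc
  obtain ⟨t0, ht0, hmin⟩ := Finset.exists_min_image c.support (fun t => ∑ i, t.1.2 i) hne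
  unfold Represents at h
  let γ : Fin n →₀ ℕ := Finsupp.equivFunOnFinite.symm t0.1.2
  let L : (Fin m → WeylAlg n K) →ₗ[K] K :=
    (MvPolynomial.lcoeff K (Finsupp.equivFunOnFinite.symm t0.1.1)) ∘ₗ
      (LinearMap.applyₗ (monomial γ (1 : K))) ∘ₗ
      (WeylAlg n K).val.toLinearMap ∘ₗ (LinearMap.proj t0.2)
  have hL : ∀ v, L v = coeff (Finsupp.equivFunOnFinite.symm t0.1.1)
      (((v t0.2 : WeylAlg n K) : Module.End K (MvPolynomial (Fin n) K)) (monomial γ 1)) := fun v => rfl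
  have h2 := congrArg L h
  rw [map_zero, Finsupp.sum, map_sum, Finset.sum_eq_single t0] at h2
  · rw [map_smul, hL, termVal, Pi.single_eq_same] at h2
    change 0 = _ • coeff _ (((wM n K t0.1 : WeylAlg n K) : Module.End K (MvPolynomial (Fin n) K)) (monomial γ (1 : K))) at h2
    rw [wM_monomial] at h2
    simp only [γ, tsub_self, add_zero, coeff_monomial, if_true, smul_eq_mul] at h2
    rcases mul_eq_zero.1 h2.symm with h3 | h3
    · exact (Finsupp.mem_support_iff.1 ht0) h3
    · rw [Finset.prod_eq_zero_iff] at h3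
      obtain ⟨i, -, hi⟩ := h3
      simp [Nat.factorial_ne_zero] at hi
  · intro t ht htt
    rw [map_smul, hL, termVal]
    by_cases h3 : t.2 = t0.2
    · rw [h3, Pi.single_eq_same]
      change _ • coeff _ (((wM n K t.1 : WeylAlg n K) : Module.End K (MvPolynomial (Fin n) K)) (monomial γ (1 : K))) = 0
      rw [wM_monomial]
      by_cases h4 : ∃ i, t0.1.2 i < t.1.2 i
      · obtain ⟨i, hi⟩ := h4
        rw [Finset.prod_eq_zero (Finset.mem_univ i)]
        · simp
        · simp [γ, Nat.descFactorial_eq_zero_iff_lt, hi]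
      · push Not at h4
        have h5 : t.1.2 = t0.1.2 := by
          have := (Finset.sum_eq_sum_iff_of_le (s := Finset.univ) (fun i _ => h4 i)).1
            (le_antisymm (Finset.sum_le_sum fun i _ => h4 i) (hmin t ht))
          funext i; exact this i (Finset.mem_univ i)
        rw [coeff_monomial, if_neg, smul_zero]
        intro h6
        apply htt
        simp only [γ, h5, tsub_self, add_zero] at h6
        exact Prod.ext (Prod.ext (Finsupp.equivFunOnFinite.symm.injective h6) h5) h3
    · rw [Pi.single_eq_of_ne (Ne.symm h3)]; simp
  · intro h; exact absurd ht0 h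

/-! Orders -/

/-- list of functionals -/
def keyF {n p : ℕ} (B : Fin n → Fin p) (j : Fin p) : List (WExp n → ℕ) :=
  [fun t => ordBlk B t.1 t.2 j] ++
  (((List.finRange p).filter fun k => k ≠ j).map fun k t => ordBlk B t.1 t.2 k) ++
  (((List.finRange n).filter fun i => B i = j).map fun i t => t.1 i) ++
  (((List.finRange n).filter fun i => B i = j).map fun i t => t.2 i) ++
  ((((List.finRange n).filter fun i => B i ≠ j).map
    fun i => [fun t => t.1 i, fun t => t.2 i]).flatten)

variable {p m : ℕ}

lemma keyList_eq (B : Fin n → Fin p) (j : Fin p) (t : WExp n) :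
    keyList B j t = (keyF B j).map fun φ => φ t := by
  unfold keyList keyF
  simp [List.map_flatten, Function.comp_def]

lemma ordBlk_add (B : Fin n → Fin p) (s t : WExp n) (j : Fin p) :
    ordBlk B (s + t).1 (s + t).2 j = ordBlk B s.1 s.2 j + ordBlk B t.1 t.2 j := by
  unfold ordBlk
  rw [← Finset.sum_add_distrib]
  apply Finset.sum_congr rfl
  intros
  simp only [Prod.fst_add, Prod.snd_add, Pi.add_apply]
  ring

lemma ordBlk_mono (B : Fin n → Fin p) {s t : WExp n} (h : s ≤ t) (j : Fin p) :
    ordBlk B s.1 s.2 j ≤ ordBlk B t.1 t.2 j :=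
  Finset.sum_le_sum fun i _ => add_le_add (h.1 i) (h.2 i)

lemma keyF_cases (B : Fin n → Fin p) (j : Fin p) (φ : WExp n → ℕ) (h : φ ∈ keyF B j) :
    (∃ k, φ = fun t => ordBlk B t.1 t.2 k) ∨ (∃ i, φ = fun t => t.1 i) ∨
      (∃ i, φ = fun t => t.2 i) := by
  simp only [keyF, List.mem_append, List.mem_singleton, List.mem_map, List.mem_flatten] at h
  rcases h with (((h | ⟨k, -, h⟩) | ⟨k, -, h⟩) | ⟨k, -, h⟩) | ⟨l, ⟨k, -, rfl⟩, h⟩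
  · exact Or.inl ⟨j, h⟩
  · exact Or.inl ⟨k, h.symm⟩
  · exact Or.inr (Or.inl ⟨k, h.symm⟩)
  · exact Or.inr (Or.inr ⟨k, h.symm⟩)
  · simp only [List.mem_cons, List.not_mem_nil, or_false] at h
    rcases h with h | h
    · exact Or.inr (Or.inl ⟨k, h⟩)
    · exact Or.inr (Or.inr ⟨k, h⟩)

lemma keyF_add (B : Fin n → Fin p) (j : Fin p) (φ : WExp n → ℕ) (h : φ ∈ keyF B j)
    (s t : WExp n) : φ (s + t) = φ s + φ t := by
  rcases keyF_cases B j φ h with ⟨k, rfl⟩ | ⟨k, rfl⟩ | ⟨k, rfl⟩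
  · exact ordBlk_add B s t k
  · rfl
  · rfl

lemma keyF_mono (B : Fin n → Fin p) (j : Fin p) (φ : WExp n → ℕ) (h : φ ∈ keyF B j)
    {s t : WExp n} (hst : s ≤ t) : φ s ≤ φ t := by
  rcases keyF_cases B j φ h with ⟨k, rfl⟩ | ⟨k, rfl⟩ | ⟨k, rfl⟩
  · exact ordBlk_mono B hst k
  · exact hst.1 k
  · exact hst.2 k

lemma keyList_inj (B : Fin n → Fin p) (j : Fin p) {s t : WExp n}
    (h : keyList B j s = keyList B j t) : s = t := by
  rw [keyList_eq, keyList_eq, List.map_inj_left] at h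
  have h1 : ∀ i, (fun t : WExp n => t.1 i) ∈ keyF B j ∧ (fun t : WExp n => t.2 i) ∈ keyF B j := by
    intro i
    by_cases hi : B i = j
    · constructor
      · refine List.mem_append_left _ (List.mem_append_left _ (List.mem_append_right _ ?_))
        exact List.mem_map.2 ⟨i, by simp [hi], rfl⟩
      · refine List.mem_append_left _ (List.mem_append_right _ ?_)
        exact List.mem_map.2 ⟨i, by simp [hi], rfl⟩
    · constructor
      · refine List.mem_append_right _ (List.mem_flatten.2 ⟨_, List.mem_map.2 ⟨i, by simp [hi], rfl⟩, ?_⟩)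
        simp
      · refine List.mem_append_right _ (List.mem_flatten.2 ⟨_, List.mem_map.2 ⟨i, by simp [hi], rfl⟩, ?_⟩)
        simp
  apply Prod.ext
  · funext i; exact h _ (h1 i).1
  · funext i; exact h _ (h1 i).2

lemma monLt_add (B : Fin n → Fin p) (j : Fin p) {s t : WExp n} (h : monLt B j s t) (θ : WExp n) :
    monLt B j (θ + s) (θ + t) := by
  unfold monLt at *
  rw [keyList_eq, keyList_eq] at *
  have hF := fun φ hφ => keyF_add B j φ hφ
  generalize keyF B j = F at *
  induction F with
  | nil => simp at h
  | cons φ F ih =>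
    simp only [List.map_cons] at *
    have h1 := hF φ (by simp) θ s
    have h2 := hF φ (by simp) θ t
    rcases List.cons_lex_cons_iff.1 h with h | ⟨h, h'⟩
    · exact List.Lex.rel (by omega)
    · rw [show φ (θ + s) = φ (θ + t) by omega]
      exact List.Lex.cons (ih h' (fun ψ hψ => hF ψ (by simp [hψ])))

lemma monLt_of_lt (B : Fin n → Fin p) (j : Fin p) {s t : WExp n} (h : s < t) :
    monLt B j s t := by
  have hne : keyList B j s ≠ keyList B j t := fun h' => h.ne (keyList_inj B j h')
  unfold monLt
  rw [keyList_eq, keyList_eq] at *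
  have hF := fun φ hφ => keyF_mono B j φ hφ h.le
  generalize keyF B j = F at *
  induction F with
  | nil => simp at hne
  | cons φ F ih =>
    simp only [List.map_cons] at *
    have h1 := hF φ (by simp)
    rcases h1.lt_or_eq with h2 | h2
    · exact List.Lex.rel h2
    · rw [h2]
      refine List.Lex.cons (ih ?_ (fun ψ hψ => hF ψ (by simp [hψ])))
      intro h3; apply hne; rw [h2, h3]

lemma monLt_ord (B : Fin n → Fin p) (j : Fin p) {s t : WExp n} (h : monLt B j s t) :
    ordBlk B s.1 s.2 j ≤ ordBlk B t.1 t.2 j := by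
  unfold monLt keyList at h
  simp only [List.singleton_append, List.cons_append] at h
  rcases List.cons_lex_cons_iff.1 h with h | ⟨h, h'⟩
  · exact le_of_lt h
  · exact h.le

/-- linear key -/
def tkey (B : Fin n → Fin p) (j : Fin p) (t : WTerm n m) : List ℕ ×ₗ Fin m :=
  toLex (keyList B j t.1, t.2)

lemma termLt_iff (B : Fin n → Fin p) (j : Fin p) (s t : WTerm n m) :
    termLt B j s t ↔ tkey B j s < tkey B j t := by
  unfold termLt tkey
  rw [Prod.Lex.toLex_lt_toLex]
  constructor
  · rintro (h | ⟨h, h'⟩)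
    · exact Or.inl h
    · exact Or.inr ⟨by rw [h], h'⟩
  · rintro (h | ⟨h, h'⟩)
    · exact Or.inl h
    · exact Or.inr ⟨keyList_inj B j h, h'⟩

lemma tkey_inj (B : Fin n → Fin p) (j : Fin p) {s t : WTerm n m} (h : tkey B j s = tkey B j t) :
    s = t := by
  have h' := toLex.injective h
  exact Prod.ext (keyList_inj B j (congrArg Prod.fst h')) (congrArg (Prod.snd : List ℕ × Fin m → Fin m) h')

lemma exists_leader (B : Fin n → Fin p) (j : Fin p) (c : WTerm n m →₀ K) (hc : c ≠ 0) :
    ∃ u, IsLeader B j c u := by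
  obtain ⟨u, hu, hmax⟩ := Finset.exists_max_image c.support (tkey B j)
    (Finsupp.support_nonempty_iff.2 hc)
  refine ⟨u, hu, fun t ht htu => (termLt_iff B j t u).2 (lt_of_le_of_ne (hmax t ht) ?_)⟩
  exact fun h => htu (tkey_inj B j h)

lemma termLt_ord (B : Fin n → Fin p) (j : Fin p) {s t : WTerm n m} (h : termLt B j s t) :
    ordT B j s ≤ ordT B j t := by
  rcases h with h | ⟨h, -⟩
  · exact monLt_ord B j h
  · unfold ordT; rw [h]

lemma IsLeader.ord_le {B : Fin n → Fin p} {j : Fin p} {c : WTerm n m →₀ K} {u : WTerm n m}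
    (h : IsLeader B j c u) {t : WTerm n m} (ht : t ∈ c.support) : ordT B j t ≤ ordT B j u := by
  by_cases htu : t = u
  · rw [htu]
  · exact termLt_ord B j (h.2 t ht htu)

lemma termLt_add (B : Fin n → Fin p) (j : Fin p) {s t : WTerm n m} (h : termLt B j s t)
    (θ : WExp n) : termLt B j (θ + s.1, s.2) (θ + t.1, t.2) := by
  rcases h with h | ⟨h, h'⟩
  · exact Or.inl (monLt_add B j h θ)
  · exact Or.inr ⟨by rw [h], h'⟩

lemma termLt_trans (B : Fin n → Fin p) (j : Fin p) {s t u : WTerm n m} (h : termLt B j s t)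
    (h' : termLt B j t u) : termLt B j s u := by
  rw [termLt_iff] at *; exact h.trans h'

lemma finite_ord (B : Fin n → Fin p) (r : Fin p → ℕ) :
    {u : WTerm n m | ∀ j, ordT B j u ≤ r j}.Finite := by
  have hfin : ((Set.Iic (fun i => r (B i)) ×ˢ Set.Iic (fun i => r (B i))) ×ˢ
      (Set.univ : Set (Fin m)) : Set (WTerm n m)).Finite :=
    ((Set.finite_Iic _).prod (Set.finite_Iic _)).prod Set.finite_univ
  refine hfin.subset ?_
  intro u hu
  have h1 : ∀ i, u.1.1 i + u.1.2 i ≤ r (B i) := by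
    intro i
    refine le_trans ?_ (hu (B i))
    unfold ordT ordBlk
    exact Finset.single_le_sum (f := fun i => u.1.1 i + u.1.2 i) (fun _ _ => Nat.zero_le _)
      (Finset.mem_filter.2 ⟨Finset.mem_univ i, rfl⟩)
  refine ⟨⟨fun i => ?_, fun i => ?_⟩, trivial⟩
  · have := h1 i; change u.1.1 i ≤ r (B i); omega
  · have := h1 i; change u.1.2 i ≤ r (B i); omega

lemma tquot_add {u s : WTerm n m} (h : tdvd s u) : tquot u s + s.1 = u.1 := by
  apply Prod.ext
  · exact tsub_add_cancel_of_le h.2.1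
  · exact tsub_add_cancel_of_le h.2.2

variable {M : Type} [AddCommGroup M] [Module K M] [Module (WeylAlg n K) M]
    [IsScalarTower K (WeylAlg n K) M]

lemma represents_apply (f : Fin m → M) (c : WTerm n m →₀ K) (v : Fin m → WeylAlg n K)
    (h : Represents c v) (D : WeylAlg n K) :
    D • ∑ j, v j • f j = c.sum fun t a => a • ((D * wM n K t.1) • f t.2) := by
  have h1 : ∀ t : WTerm n m, ∑ j, (termVal K t j) • f j = wM n K t.1 • f t.2 := by
    intro t
    rw [Finset.sum_eq_single t.2]
    · simp [termVal, wM]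
    · intro j _ hj; simp [termVal, hj]
    · simp
  unfold Represents at h
  rw [h, Finsupp.sum, Finsupp.sum]
  simp only [Finset.sum_apply, Pi.smul_apply, Finset.sum_smul]
  rw [Finset.sum_comm, Finset.smul_sum]
  apply Finset.sum_congr rfl
  intro t _
  simp only [smul_assoc]
  rw [← Finset.smul_sum, h1, ← smul_assoc (c t) (wM n K t.1) (f t.2), ← mul_smul, mul_smul_comm,
    smul_assoc]

end Helpers

theorem statement_16 (n p m d : ℕ) (hp : 0 < p) (K : Type) [Field K] [CharZero K]
    (nn : Fin p → ℕ) (hn : ∑ j, nn j = n)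
    (B : Fin n → Fin p) (hBmono : Monotone B)
    (hBcard : ∀ j, (Finset.univ.filter fun i => B i = j).card = nn j)
    (M : Type) [AddCommGroup M] [Module K M] [Module (WeylAlg n K) M]
    [IsScalarTower K (WeylAlg n K) M]
    (f : Fin m → M) (hgen : Submodule.span (WeylAlg n K) (Set.range f) = ⊤)
    (g : Fin d → Fin m → WeylAlg n K) (hg0 : ∀ i, g i ≠ 0)
    (hker : ∀ i, ∑ j, g i j • f j = 0)
    (cg : Fin d → (WTerm n m →₀ K)) (ug : Fin d → Fin p → WTerm n m)
    (hrep : ∀ i, Represents (cg i) (g i))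
    (hlead : ∀ i j, IsLeader B j (cg i) (ug i j))
    (hGB : ∀ v : Fin m → WeylAlg n K, (∑ j, v j • f j) = 0 → v ≠ 0 →
      ∀ (cf : WTerm n m →₀ K) (uf : Fin p → WTerm n m),
        Represents cf v → (∀ j, IsLeader B j cf (uf j)) →
        ∃ i, rhoDvd B hp (ug i) uf)
    (r : Fin p → ℕ)
    (V V' U : Set (WTerm n m))
    (hV : V = {u | (∀ j, ordT B j u ≤ r j) ∧ ∀ i, ¬ tdvd (ug i ⟨0, hp⟩) u})
    (hV' : V' = {u | (∀ j, ordT B j u ≤ r j) ∧ u ∉ V ∧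
      ∀ i, tdvd (ug i ⟨0, hp⟩) u →
        ∃ j, j ≠ (⟨0, hp⟩ : Fin p) ∧
          r j < ordBlk B (tquot u (ug i ⟨0, hp⟩)).1 (tquot u (ug i ⟨0, hp⟩)).2 j +
            ordT B j (ug i j)})
    (hU : U = V ∪ V') :
    LinearIndependent K
      (fun x : ((fun u : WTerm n m => wMono n K u.1.1 u.1.2 • f u.2) '' U) => (x : M)) ∧
    Submodule.span K ((fun u : WTerm n m => wMono n K u.1.1 u.1.2 • f u.2) '' U) =
      modFilB n p K B M m f (fun j => (r j : ℤ)) := by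
  set π : WTerm n m → M := fun u => wMono n K u.1.1 u.1.2 • f u.2 with hπ
  have hUord : ∀ u ∈ U, ∀ j, ordT B j u ≤ r j := by
    intro u hu
    rw [hU] at hu
    rcases hu with hu | hu
    · rw [hV] at hu; exact hu.1
    · rw [hV'] at hu; exact hu.1
  have hUbad : ∀ u ∈ U, ∀ i, tdvd (ug i ⟨0, hp⟩) u →
      ∃ j, j ≠ (⟨0, hp⟩ : Fin p) ∧
        r j < ordBlk B (tquot u (ug i ⟨0, hp⟩)).1 (tquot u (ug i ⟨0, hp⟩)).2 j +
          ordT B j (ug i j) := by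
    intro u hu i hi
    rw [hU] at hu
    rcases hu with hu | hu
    · rw [hV] at hu; exact absurd hi (hu.2 i)
    · rw [hV'] at hu; exact hu.2.2 i hi
  have hUnot : ∀ u, (∀ j, ordT B j u ≤ r j) → u ∉ U → ∃ i, tdvd (ug i ⟨0, hp⟩) u ∧
      ∀ j, j ≠ (⟨0, hp⟩ : Fin p) →
        ordBlk B (tquot u (ug i ⟨0, hp⟩)).1 (tquot u (ug i ⟨0, hp⟩)).2 j +
          ordT B j (ug i j) ≤ r j := by
    intro u hu hnU
    by_contra hcon
    push Not at hcon
    apply hnU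
    rw [hU]
    by_cases huV : u ∈ V
    · exact Or.inl huV
    · right
      rw [hV']
      exact ⟨hu, huV, hcon⟩
  have hquot : ∀ {u s : WTerm n m}, tdvd s u → ∀ j,
      ordBlk B (tquot u s).1 (tquot u s).2 j + ordT B j s = ordT B j u := by
    intro u s h j
    have := ordBlk_add B (tquot u s) s.1 j
    rw [tquot_add h] at this
    exact this.symm
  constructor
  · have hli : LinearIndepOn K π U := by
      rw [linearIndepOn_iff]
      intro c hcU hc0
      by_contra hc
      let v : Fin m → WeylAlg n K := c.sum fun t a => a • termVal K t
      have hv : Represents c v := rfl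
      have hvne : v ≠ 0 := by
        intro h0
        apply hc
        apply represents_zero c
        rw [← h0]; exact hv
      have hv0 : ∑ j, v j • f j = 0 := by
        have := represents_apply f c v hv 1
        rw [one_smul] at this
        rw [this, ← hc0, Finsupp.linearCombination_apply]
        simp only [one_mul]
        rfl
      choose uf huf using fun j => exists_leader B j c hc
      obtain ⟨i, hdv, hord⟩ := hGB v hv0 hvne c uf hv huf
      have hmem : ∀ j, uf j ∈ U := fun j => hcU (huf j).1
      obtain ⟨j, -, hj⟩ := hUbad _ (hmem ⟨0, hp⟩) i hdv
      have h1 := hord j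
      have h2 := hquot hdv j
      have h3 := hUord _ (hmem j) j
      omega
    exact hli.id_image
  · have key : ∀ u : WTerm n m, (∀ j, ordT B j u ≤ r j) → π u ∈ Submodule.span K (π '' U) := by
      by_contra hcon
      push Not at hcon
      have hfin : {u : WTerm n m | (∀ j, ordT B j u ≤ r j) ∧
          π u ∉ Submodule.span K (π '' U)}.Finite :=
        (finite_ord B r).subset fun u hu => hu.1
      obtain ⟨u, ⟨huord, hubad⟩, hmin⟩ := Set.exists_min_image _ (tkey B ⟨0, hp⟩) hfin hcon
      have hsmall : ∀ t : WTerm n m, (∀ j, ordT B j t ≤ r j) → termLt B ⟨0, hp⟩ t u →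
          π t ∈ Submodule.span K (π '' U) := by
        intro t ht htu
        by_contra hbad
        exact absurd ((termLt_iff B ⟨0, hp⟩ t u).1 htu) (not_lt.2 (hmin t ⟨ht, hbad⟩))
      have hnU : u ∉ U := fun h => hubad (Submodule.subset_span ⟨u, h, rfl⟩)
      obtain ⟨i, hdv, hle⟩ := hUnot u huord hnU
      set θ := tquot u (ug i ⟨0, hp⟩) with hθ
      have hzero := represents_apply f (cg i) (g i) (hrep i) (wM n K θ)
      rw [hker, smul_zero, Finsupp.sum] at hzero
      have hordle : ∀ t ∈ (cg i).support, ∀ j, ordT B j (θ + t.1, t.2) ≤ r j := by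
        intro t ht j
        have h1 : ordT B j (θ + t.1, t.2) = ordBlk B θ.1 θ.2 j + ordT B j t :=
          ordBlk_add B θ t.1 j
        have h2 := (hlead i j).ord_le ht
        by_cases hj : j = ⟨0, hp⟩
        · subst hj
          have h3 := hquot hdv ⟨0, hp⟩
          have h4 := huord ⟨0, hp⟩
          rw [← hθ] at h3
          omega
        · have h3 := hle j hj
          omega
      have hueq : ((θ + (ug i ⟨0, hp⟩).1, (ug i ⟨0, hp⟩).2) : WTerm n m) = u :=
        Prod.ext (tquot_add hdv) hdv.1
      have htle : ∀ t ∈ (cg i).support, (θ + t.1, t.2) = u ∨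
          termLt B ⟨0, hp⟩ (θ + t.1, t.2) u := by
        intro t ht
        by_cases h : t = ug i ⟨0, hp⟩
        · left; rw [h]; exact hueq
        · right
          rw [← hueq]
          exact termLt_add B _ ((hlead i ⟨0, hp⟩).2 t ht h) θ
      have hlow : ∀ t ∈ (cg i).support, ∀ D ∈ lowW n K (θ + t.1),
          D • f t.2 ∈ Submodule.span K (π '' U) := by
        intro t ht D hD
        unfold lowW at hD
        induction hD using Submodule.span_induction with
        | mem x hx =>
          obtain ⟨s, hs, rfl⟩ := hx
          have hs : s < θ + t.1 := hs
          refine hsmall (s, t.2) (fun j => (ordBlk_mono B hs.le j).trans (hordle t ht j)) ?_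
          have h1 : termLt B ⟨0, hp⟩ (s, t.2) (θ + t.1, t.2) := Or.inl (monLt_of_lt B _ hs)
          rcases htle t ht with h2 | h2
          · rw [← h2]; exact h1
          · exact termLt_trans B _ h1 h2
        | zero => simp
        | add x y _ _ hx hy => rw [add_smul]; exact add_mem hx hy
        | smul a x _ hx => rw [smul_assoc]; exact Submodule.smul_mem _ _ hx
      have hterm : ∀ t ∈ (cg i).support,
          (wM n K θ * wM n K t.1) • f t.2 - π (θ + t.1, t.2) ∈ Submodule.span K (π '' U) := by
        intro t ht
        obtain ⟨y, hy, e⟩ := hasSym_wM (K := K) θ t.1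
        have h1 : (wM n K θ * wM n K t.1) • f t.2 - π (θ + t.1, t.2) = y • f t.2 := by
          rw [e, add_smul]
          exact add_sub_cancel_left _ _
        rw [h1]
        exact hlow t ht y hy
      have hu0 := (hlead i ⟨0, hp⟩).1
      rw [← Finset.add_sum_erase _ _ hu0] at hzero
      have hrest : ∑ t ∈ (cg i).support.erase (ug i ⟨0, hp⟩),
          (cg i) t • ((wM n K θ * wM n K t.1) • f t.2) ∈ Submodule.span K (π '' U) := by
        apply Submodule.sum_mem
        intro t ht
        obtain ⟨hne, ht⟩ := Finset.mem_erase.1 ht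
        apply Submodule.smul_mem
        have h1 : π (θ + t.1, t.2) ∈ Submodule.span K (π '' U) := by
          apply hsmall _ (hordle t ht)
          rw [← hueq]
          exact termLt_add B _ ((hlead i ⟨0, hp⟩).2 t ht hne) θ
        simpa using add_mem (hterm t ht) h1
      have h1 : (cg i) (ug i ⟨0, hp⟩) •
          ((wM n K θ * wM n K (ug i ⟨0, hp⟩).1) • f (ug i ⟨0, hp⟩).2) ∈
          Submodule.span K (π '' U) := by
        rw [eq_neg_of_add_eq_zero_left hzero.symm]
        exact neg_mem hrest
      rw [Submodule.smul_mem_iff _ (Finsupp.mem_support_iff.1 hu0)] at h1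
      have h2 := sub_mem h1 (hterm _ hu0)
      rw [sub_sub_cancel, hueq] at h2
      exact hubad h2
    apply le_antisymm
    · apply Submodule.span_le.2
      rintro _ ⟨u, hu, rfl⟩
      refine Submodule.subset_span ⟨u.2, wMono n K u.1.1 u.1.2, ?_, rfl⟩
      refine Submodule.subset_span ⟨_, _, fun j => ?_, rfl⟩
      exact Int.ofNat_le.2 (hUord u hu j)
    · apply Submodule.span_le.2
      rintro _ ⟨i, D, hD, rfl⟩
      unfold bernWB at hD
      change D • f i ∈ Submodule.span K (π '' U)
      induction hD using Submodule.span_induction with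
      | mem x hx =>
        obtain ⟨α, β, h, rfl⟩ := hx
        exact key ((α, β), i) (fun j => Int.ofNat_le.1 (h j))
      | zero => simp
      | add x y _ _ hx hy => rw [add_smul]; exact add_mem hx hy
      | smul a x _ hx => rw [smul_assoc]; exact Submodule.smul_mem _ _ hx
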